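/- arXiv:2502.14772 — 4 statements merged into one kernel-verified Lean document; each statement's English description precedes it below -/
import Mathlib

section
/- Let k be a positive integer, β > 0, and z ∈ ℝ^k. Then E_{x ~ N(z, I_k)}[ F_{β,k}(x) ] · Z_{β,k} = z zᵀ · e^{−‖z‖²/(β√k+2)}, where the expectation of the matrix-valued function is taken entrywise. -/
open MeasureTheory

/-- The Gaussian measure `N(z, σ2 · I_k)` on `ℝ^k`, defined via its density
with respect to Lebesgue measure. -/
noncomputable def gaussian (k : ℕ) (z : EuclideanSpace ℝ (Fin k)) (σ2 : ℝ) :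
    Measure (EuclideanSpace ℝ (Fin k)) :=
  volume.withDensity fun x =>
    ENNReal.ofReal ((2 * Real.pi * σ2) ^ (-(k : ℝ) / 2) * Real.exp (-‖x - z‖ ^ 2 / (2 * σ2)))

/-- The normalization constant `Z_{β,k} = (1 + 2/(β√k))^{k/2+2}`. -/
noncomputable def Zconst (β : ℝ) (k : ℕ) : ℝ :=
  (1 + 2 / (β * Real.sqrt k)) ^ ((k : ℝ) / 2 + 2)

/-- The matrix `F_{β,k}(x) = (x xᵀ − (β√k/(β√k+2)) I_k) · e^{−‖x‖²/(β√k)}`. -/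
noncomputable def Fmat (β : ℝ) (k : ℕ) (x : EuclideanSpace ℝ (Fin k)) :
    Matrix (Fin k) (Fin k) ℝ :=
  Real.exp (-‖x‖ ^ 2 / (β * Real.sqrt k)) •
    (Matrix.of (fun i j => x i * x j)
      - (β * Real.sqrt k / (β * Real.sqrt k + 2)) • (1 : Matrix (Fin k) (Fin k) ℝ))

/-- The operator (spectral) norm of a real `k × k` matrix. -/
noncomputable def matOpNorm {k : ℕ} (A : Matrix (Fin k) (Fin k) ℝ) : ℝ :=
  ‖(Matrix.toEuclideanCLM (𝕜 := ℝ) A :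
      EuclideanSpace ℝ (Fin k) →L[ℝ] EuclideanSpace ℝ (Fin k))‖

/-- The quadratic form `vᵀ A v`. -/
def quadForm {k : ℕ} (A : Matrix (Fin k) (Fin k) ℝ) (v : EuclideanSpace ℝ (Fin k)) : ℝ :=
  ∑ i, ∑ j, v i * A i j * v j

/-- The bilinear form `vᵀ A u`. -/
def bilinForm {k : ℕ} (A : Matrix (Fin k) (Fin k) ℝ) (v u : EuclideanSpace ℝ (Fin k)) : ℝ :=
  ∑ i, ∑ j, v i * A i j * u j

/-!
Multiplying the density of `N(z, s I)` by `e^{-‖x‖²/c}` adds the precisions `1/s` and `2/c`: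
completing the square gives a multiple of the density of `N(v z, v s I)` with `v = c / (c + 2 s)`.
For `s = 1` and `c = β√k` the matrix subtracted in `F_{β,k}` is exactly the covariance `v I` of this
tilted Gaussian, so only the outer product `v² z zᵀ` of its mean survives, and
`Z_{β,k} = v^{-(k/2+2)}` cancels `v²` and the total mass `v^{k/2} e^{-‖z‖²/(c+2)}` up to its
exponential factor.
-/

open ProbabilityTheory Matrix
open scoped RealInnerProductSpace

section MultivariateGaussian

variable {ι : Type*} [Fintype ι] [DecidableEq ι]

lemma integral_coord_multivariateGaussian (z : EuclideanSpace ℝ ι) (S : Matrix ι ι ℝ) (i : ι) :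
    ∫ x, x i ∂(multivariateGaussian z S) = z i := by
  simpa using (EuclideanSpace.proj (𝕜 := ℝ) i).integral_comp_id_comm
    (IsGaussian.integrable_id (μ := multivariateGaussian z S))

lemma memLp_coord_multivariateGaussian (z : EuclideanSpace ℝ ι) (S : Matrix ι ι ℝ) (i : ι) :
    MemLp (fun x : EuclideanSpace ℝ ι => x i) 2 (multivariateGaussian z S) :=
  IsGaussian.memLp_dual _ (EuclideanSpace.proj i) 2 (by simp)

lemma integral_coord_mul_coord_sub_multivariateGaussian {S : Matrix ι ι ℝ} (hS : S.PosSemidef)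
    (z : EuclideanSpace ℝ ι) (i j : ι) :
    ∫ x, (x i * x j - S i j) ∂(multivariateGaussian z S) = z i * z j := by
  have hi := memLp_coord_multivariateGaussian z S i
  have hj := memLp_coord_multivariateGaussian z S j
  have hcov := covariance_eval_multivariateGaussian (μ := z) hS i j
  rw [covariance_eq_sub hi hj, integral_coord_multivariateGaussian,
    integral_coord_multivariateGaussian] at hcov
  have hint : Integrable (fun x : EuclideanSpace ℝ ι => x i * x j) (multivariateGaussian z S) :=
    hi.integrable_mul hj
  rw [integral_sub hint (integrable_const _), integral_const, probReal_univ, one_smul]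
  exact sub_eq_iff_eq_add'.mpr (sub_eq_iff_eq_add.mp hcov)

end MultivariateGaussian

/-- The Lebesgue density of `N(z, s · I_k)`, as a real-valued function. It is the integrand in the
definition of `gaussian k z s`, named so that densities can be manipulated pointwise. -/
noncomputable def gaussianDensity (k : ℕ) (z : EuclideanSpace ℝ (Fin k)) (s : ℝ)
    (x : EuclideanSpace ℝ (Fin k)) : ℝ :=
  (2 * Real.pi * s) ^ (-(k : ℝ) / 2) * Real.exp (-‖x - z‖ ^ 2 / (2 * s))

section GaussianMeasure

variable {k : ℕ} {s : ℝ}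

lemma continuous_gaussianDensity (z : EuclideanSpace ℝ (Fin k)) (s : ℝ) :
    Continuous (gaussianDensity k z s) := by
  unfold gaussianDensity
  fun_prop

lemma gaussianDensity_nonneg (hs : 0 ≤ s) (z x : EuclideanSpace ℝ (Fin k)) :
    0 ≤ gaussianDensity k z s x := by
  unfold gaussianDensity
  positivity

lemma integral_gaussian_eq_integral_smul {E : Type*} [NormedAddCommGroup E] [NormedSpace ℝ E]
    (hs : 0 ≤ s) (z : EuclideanSpace ℝ (Fin k)) (f : EuclideanSpace ℝ (Fin k) → E) :
    ∫ x, f x ∂(gaussian k z s) = ∫ x, gaussianDensity k z s x • f x := by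
  have hmeas : Measurable fun x => ENNReal.ofReal (gaussianDensity k z s x) :=
    (continuous_gaussianDensity z s).measurable.ennreal_ofReal
  change ∫ x, f x ∂(volume.withDensity fun x => ENNReal.ofReal (gaussianDensity k z s x)) = _
  rw [integral_withDensity_eq_integral_toReal_smul hmeas (by simp)]
  simp only [ENNReal.toReal_ofReal (gaussianDensity_nonneg hs z _)]

lemma integrable_gaussianDensity (hs : 0 < s) (z : EuclideanSpace ℝ (Fin k)) :
    Integrable (gaussianDensity k z s) := by
  have hexp : Integrable fun x : EuclideanSpace ℝ (Fin k) => Real.exp (-(2 * s)⁻¹ * ‖x‖ ^ 2) := by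
    refine .of_integral_ne_zero ?_
    rw [GaussianFourier.integral_rexp_neg_mul_sq_norm (by positivity)]
    positivity
  simp only [neg_mul, ← div_eq_inv_mul, ← neg_div] at hexp
  exact (hexp.comp_sub_right z).const_mul _

lemma isFiniteMeasure_gaussian (hs : 0 < s) (z : EuclideanSpace ℝ (Fin k)) :
    IsFiniteMeasure (gaussian k z s) :=
  isFiniteMeasure_withDensity_ofReal (integrable_gaussianDensity hs z).hasFiniteIntegral

lemma two_pi_mul_rpow_neg_mul_pi_div_cpow (hs : 0 < s) :
    (((2 * Real.pi * s) ^ (-(k : ℝ) / 2) : ℝ) : ℂ) *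
      (Real.pi / ((1 / (2 * s) : ℝ) : ℂ)) ^ (k / 2 : ℂ) = 1 := by
  have hbase : Real.pi / ((1 / (2 * s) : ℝ) : ℂ) = ((2 * Real.pi * s : ℝ) : ℂ) := by
    push_cast
    field_simp
  have hexponent : (k / 2 : ℂ) = ((k / 2 : ℝ) : ℂ) := by
    push_cast
    rfl
  rw [hbase, hexponent, ← Complex.ofReal_cpow (by positivity), ← Complex.ofReal_mul,
    ← Real.rpow_add (by positivity), neg_div, neg_add_cancel, Real.rpow_zero, Complex.ofReal_one]

lemma charFun_gaussian (hs : 0 < s) (z t : EuclideanSpace ℝ (Fin k)) :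
    charFun (gaussian k z s) t = Complex.exp (⟪t, z⟫ * Complex.I - s * ‖t‖ ^ 2 / 2) := by
  have hb : 0 < ((1 / (2 * s) : ℝ) : ℂ).re := by
    rw [Complex.ofReal_re]
    positivity
  have hshift (y : EuclideanSpace ℝ (Fin k)) :
      gaussianDensity k z s (y + z) • Complex.exp (⟪y + z, t⟫ * Complex.I) =
        (((2 * Real.pi * s) ^ (-(k : ℝ) / 2) : ℝ) * Complex.exp (⟪t, z⟫ * Complex.I)) *
          Complex.exp (-((1 / (2 * s) : ℝ) : ℂ) * ‖y‖ ^ 2 + Complex.I * ⟪t, y⟫) := by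
    rw [gaussianDensity, add_sub_cancel_right, Complex.real_smul, Complex.ofReal_mul,
      Complex.ofReal_exp, mul_assoc (Complex.ofReal _), mul_assoc (Complex.ofReal _),
      ← Complex.exp_add, ← Complex.exp_add, inner_add_left, real_inner_comm t y,
      real_inner_comm t z]
    congr 2
    push_cast
    ring
  rw [charFun_apply, integral_gaussian_eq_integral_smul hs.le, ← integral_add_right_eq_self _ z]
  simp_rw [hshift]
  rw [integral_const_mul, GaussianFourier.integral_cexp_neg_mul_sq_norm_add hb,
    finrank_euclideanSpace_fin, mul_mul_mul_comm,
    two_pi_mul_rpow_neg_mul_pi_div_cpow hs, one_mul, ← Complex.exp_add]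
  congr 1
  push_cast
  rw [Complex.I_sq]
  have : (s : ℂ) ≠ 0 := mod_cast hs.ne'
  field_simp
  ring

theorem gaussian_eq_multivariateGaussian (hs : 0 < s) (z : EuclideanSpace ℝ (Fin k)) :
    gaussian k z s = multivariateGaussian z (s • (1 : Matrix (Fin k) (Fin k) ℝ)) := by
  have := isFiniteMeasure_gaussian hs z
  refine Measure.ext_of_charFun (funext fun t => ?_)
  rw [charFun_gaussian hs, charFun_multivariateGaussian (PosSemidef.one.smul hs.le),
    smul_mulVec, one_mulVec, dotProduct_smul, smul_eq_mul, Complex.ofReal_mul,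
    ← Complex.ofReal_pow, EuclideanSpace.real_norm_sq_eq]
  simp only [dotProduct, sq]

lemma integral_coord_mul_coord_sub_gaussian (hs : 0 < s) (z : EuclideanSpace ℝ (Fin k))
    (i j : Fin k) :
    ∫ x, (x i * x j - s * (1 : Matrix (Fin k) (Fin k) ℝ) i j) ∂(gaussian k z s) = z i * z j := by
  rw [gaussian_eq_multivariateGaussian hs]
  exact integral_coord_mul_coord_sub_multivariateGaussian (PosSemidef.one.smul hs.le) z i j

end GaussianMeasure

lemma norm_sub_sq_div_add_norm_sq_div {V : Type*} [NormedAddCommGroup V] [InnerProductSpace ℝ V]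
    {c s : ℝ} (hc : c ≠ 0) (hs : s ≠ 0) (hcs : c + 2 * s ≠ 0) (x z : V) :
    ‖x - z‖ ^ 2 / (2 * s) + ‖x‖ ^ 2 / c =
      ‖x - (c / (c + 2 * s)) • z‖ ^ 2 / (2 * (c / (c + 2 * s) * s)) + ‖z‖ ^ 2 / (c + 2 * s) := by
  rw [norm_sub_sq_real, norm_sub_sq_real, real_inner_smul_right, norm_smul, mul_pow,
    Real.norm_eq_abs, sq_abs]
  field_simp
  ring

section Tilting

variable {k : ℕ} {c s : ℝ}

lemma gaussianDensity_mul_exp (hs : 0 < s) (hcs : 0 < c / (c + 2 * s))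
    (z x : EuclideanSpace ℝ (Fin k)) :
    gaussianDensity k z s x * Real.exp (-‖x‖ ^ 2 / c) =
      (c / (c + 2 * s)) ^ ((k : ℝ) / 2) * Real.exp (-‖z‖ ^ 2 / (c + 2 * s)) *
        gaussianDensity k ((c / (c + 2 * s)) • z) (c / (c + 2 * s) * s) x := by
  obtain ⟨hc, hcs'⟩ := div_ne_zero_iff.mp hcs.ne'
  have hexp : Real.exp (-‖x - z‖ ^ 2 / (2 * s)) * Real.exp (-‖x‖ ^ 2 / c) =
      Real.exp (-‖z‖ ^ 2 / (c + 2 * s)) *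
        Real.exp (-‖x - (c / (c + 2 * s)) • z‖ ^ 2 / (2 * (c / (c + 2 * s) * s))) := by
    simp only [← Real.exp_add, neg_div]
    rw [← neg_add, norm_sub_sq_div_add_norm_sq_div hc hs.ne' hcs', neg_add_rev]
  have hconst : (2 * Real.pi * s) ^ (-(k : ℝ) / 2) = (c / (c + 2 * s)) ^ ((k : ℝ) / 2) *
      (2 * Real.pi * (c / (c + 2 * s) * s)) ^ (-(k : ℝ) / 2) := by
    rw [mul_left_comm (2 * Real.pi), Real.mul_rpow hcs.le (by positivity), ← mul_assoc,
      ← Real.rpow_add hcs, neg_div, add_neg_cancel, Real.rpow_zero, one_mul]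
  rw [gaussianDensity, gaussianDensity, mul_assoc, hexp, hconst]
  ring

theorem integral_exp_smul_gaussian {E : Type*} [NormedAddCommGroup E] [NormedSpace ℝ E]
    (hs : 0 < s) (hcs : 0 < c / (c + 2 * s)) (z : EuclideanSpace ℝ (Fin k))
    (f : EuclideanSpace ℝ (Fin k) → E) :
    ∫ x, Real.exp (-‖x‖ ^ 2 / c) • f x ∂(gaussian k z s) =
      ((c / (c + 2 * s)) ^ ((k : ℝ) / 2) * Real.exp (-‖z‖ ^ 2 / (c + 2 * s))) •
        ∫ x, f x ∂(gaussian k ((c / (c + 2 * s)) • z) (c / (c + 2 * s) * s)) := by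
  rw [integral_gaussian_eq_integral_smul hs.le,
    integral_gaussian_eq_integral_smul (by positivity), ← integral_smul]
  simp only [smul_smul, gaussianDensity_mul_exp hs hcs]

end Tilting

lemma Fmat_apply (β : ℝ) (k : ℕ) (x : EuclideanSpace ℝ (Fin k)) (i j : Fin k) :
    Fmat β k x i j = Real.exp (-‖x‖ ^ 2 / (β * Real.sqrt k)) •
      (x i * x j - β * Real.sqrt k / (β * Real.sqrt k + 2) *
        (1 : Matrix (Fin k) (Fin k) ℝ) i j) :=
  rfl

lemma rpow_mul_sq_mul_Zconst {β : ℝ} {k : ℕ}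
    (h : 0 < β * Real.sqrt k / (β * Real.sqrt k + 2)) :
    (β * Real.sqrt k / (β * Real.sqrt k + 2)) ^ ((k : ℝ) / 2) *
      (β * Real.sqrt k / (β * Real.sqrt k + 2)) ^ 2 * Zconst β k = 1 := by
  have hc : β * Real.sqrt k ≠ 0 := (div_ne_zero_iff.mp h.ne').1
  rw [Zconst, one_add_div hc, ← inv_div (β * Real.sqrt k), Real.inv_rpow h.le,
    ← Real.rpow_natCast _ 2, ← Real.rpow_add h, Nat.cast_ofNat,
    mul_inv_cancel₀ (Real.rpow_pos_of_pos h _).ne']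

theorem expectation_Fmat_general (k : ℕ) (β : ℝ)
    (h : 0 < β * Real.sqrt k / (β * Real.sqrt k + 2))
    (z : EuclideanSpace ℝ (Fin k)) (i j : Fin k) :
    (∫ x, Fmat β k x i j ∂(gaussian k z 1)) * Zconst β k
      = z i * z j * Real.exp (-‖z‖ ^ 2 / (β * Real.sqrt k + 2)) := by
  have hZ := rpow_mul_sq_mul_Zconst h
  simp only [Fmat_apply]
  set c := β * Real.sqrt k
  set v := c / (c + 2) with hv
  have htilt := integral_exp_smul_gaussian (s := 1) one_pos (by simpa using h) z
    fun x => x i * x j - v * (1 : Matrix (Fin k) (Fin k) ℝ) i j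
  simp only [mul_one, ← hv] at htilt
  rw [htilt, integral_coord_mul_coord_sub_gaussian h]
  simp only [PiLp.smul_apply, smul_eq_mul]
  linear_combination z i * z j * Real.exp (-‖z‖ ^ 2 / (c + 2)) * hZ

/-- For `z ∈ ℝ^k`,
`E_{x ~ N(z, I_k)}[F_{β,k}(x)] · Z_{β,k} = z zᵀ · e^{−‖z‖²/(β√k+2)}`, entrywise. -/
theorem expectation_Fmat (k : ℕ) (hk : 0 < k) (β : ℝ) (hβ : 0 < β)
    (z : EuclideanSpace ℝ (Fin k)) (i j : Fin k) :
    (∫ x, Fmat β k x i j ∂(gaussian k z 1)) * Zconst β k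
      = z i * z j * Real.exp (-‖z‖ ^ 2 / (β * Real.sqrt k + 2)) :=
  expectation_Fmat_general k β (by positivity) z i j
end

section
/- There exists an absolute constant C > 0 such that the following holds. Let k be a positive integer and β > 0 with k > 1/β², let μ ∈ ℝ^k, and let u, v ∈ ℝ^k be unit vectors. If x ~ N(μ, I_k) and Y := vᵀ (Z_{β,k} F_{β,k}(x)) u, then Var[Y] ≤ C · e^{4/β²} · β² · k. -/
open MeasureTheory

/-!
Bound the variance by the second moment. Under `N(z, σ² I)` the damped exponential
`exp (-c ‖x‖² + ⟪w, x⟫)` has an explicit Gaussian integral, and completing the square bounds it by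
`(1 + 2cσ²)^(-k/2) * exp (‖w‖² / 4c)`: the damping absorbs the drift, so the bound is uniform in the
mean `z`. Since `y ^ (2n) ≤ (2n)! cosh y`, the damped even moments of `⟪w, x⟫` obey the same
bound up to a constant. For `c = 2 / (β√k)` and `σ = 1`, rescaling a unit vector by `√c` gives
fourth moments of size `β² k (1 + 4 / (β√k))^(-k/2)`, and `(1 + t)² ≤ (1 + 2t) exp (t²)` at
`t = 2 / (β√k)` shows that `Z²` cancels the last factor up to `exp (O(1 / β²))`.
-/

section GaussianIntegral

variable {V : Type*} [NormedAddCommGroup V] [InnerProductSpace ℝ V] [FiniteDimensional ℝ V]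
  [MeasurableSpace V] [BorelSpace V] {b : ℝ}

lemma integral_exp_neg_mul_sq_norm_add_inner (hb : 0 < b) (w : V) :
    ∫ x : V, Real.exp (-b * ‖x‖ ^ 2 + inner ℝ w x)
      = (Real.pi / b) ^ ((Module.finrank ℝ V : ℝ) / 2) * Real.exp (‖w‖ ^ 2 / (4 * b)) := by
  have complex_integral :=
    GaussianFourier.integral_cexp_neg_mul_sq_norm_add (b := (b : ℂ)) (by simpa using hb) 1 w
  rw [← Complex.ofReal_inj, ← integral_complex_ofReal]
  push_cast [Complex.ofReal_cpow (by positivity : 0 ≤ Real.pi / b)]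
  simpa using complex_integral

lemma integrable_exp_neg_mul_sq_norm_add_inner (hb : 0 < b) (w : V) :
    Integrable fun x : V => Real.exp (-b * ‖x‖ ^ 2 + inner ℝ w x) := by
  refine .of_integral_ne_zero ?_
  rw [integral_exp_neg_mul_sq_norm_add_inner hb]
  positivity

end GaussianIntegral

section GaussianMeasure

variable {k : ℕ} {σ2 c : ℝ}

lemma integral_gaussian_eq (hσ : 0 ≤ σ2) (z : EuclideanSpace ℝ (Fin k))
    (f : EuclideanSpace ℝ (Fin k) → ℝ) :
    ∫ x, f x ∂gaussian k z σ2
      = (2 * Real.pi * σ2) ^ (-(k : ℝ) / 2)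
        * ∫ x, Real.exp (-‖x - z‖ ^ 2 / (2 * σ2)) * f x := by
  rw [gaussian, integral_withDensity_eq_integral_toReal_smul (by fun_prop)
    (.of_forall fun _ => ENNReal.ofReal_lt_top), ← integral_const_mul]
  congr 1 with x
  rw [ENNReal.toReal_ofReal (by positivity), smul_eq_mul, mul_assoc]

lemma integrable_gaussian_iff (hσ : 0 < σ2) {z : EuclideanSpace ℝ (Fin k)}
    {f : EuclideanSpace ℝ (Fin k) → ℝ} :
    Integrable f (gaussian k z σ2)
      ↔ Integrable fun x => Real.exp (-‖x - z‖ ^ 2 / (2 * σ2)) * f x := by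
  have const_ne_zero : (2 * Real.pi * σ2) ^ (-(k : ℝ) / 2) ≠ 0 := by positivity
  rw [gaussian, integrable_withDensity_iff_integrable_smul' (by fun_prop)
    (.of_forall fun _ => ENNReal.ofReal_lt_top),
    ← integrable_const_mul_iff (IsUnit.mk0 _ const_ne_zero)
      (fun x => Real.exp (-‖x - z‖ ^ 2 / (2 * σ2)) * f x)]
  congr! 2 with x
  rw [ENNReal.toReal_ofReal (by positivity), smul_eq_mul, mul_assoc]

lemma exp_neg_sq_norm_sub_mul_exp {V : Type*} [NormedAddCommGroup V] [InnerProductSpace ℝ V]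
    (hσ : σ2 ≠ 0) (c : ℝ) (z w x : V) :
    Real.exp (-‖x - z‖ ^ 2 / (2 * σ2)) * Real.exp (-c * ‖x‖ ^ 2 + inner ℝ w x)
      = Real.exp (-‖z‖ ^ 2 / (2 * σ2))
        * Real.exp (-((1 + 2 * c * σ2) / (2 * σ2)) * ‖x‖ ^ 2 + inner ℝ (σ2⁻¹ • z + w) x) := by
  rw [← Real.exp_add, ← Real.exp_add, norm_sub_sq_real, inner_add_left, real_inner_smul_left,
    real_inner_comm x z]
  congr 1
  field_simp
  ring

lemma integrable_exp_gaussian (hσ : 0 < σ2) (hc : 0 < 1 + 2 * c * σ2)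
    (z w : EuclideanSpace ℝ (Fin k)) :
    Integrable (fun x => Real.exp (-c * ‖x‖ ^ 2 + inner ℝ w x)) (gaussian k z σ2) := by
  simp_rw [integrable_gaussian_iff hσ, exp_neg_sq_norm_sub_mul_exp hσ.ne']
  exact (integrable_exp_neg_mul_sq_norm_add_inner (by positivity) _).const_mul _

lemma integral_exp_gaussian (hσ : 0 < σ2) (hc : 0 < 1 + 2 * c * σ2)
    (z w : EuclideanSpace ℝ (Fin k)) :
    ∫ x, Real.exp (-c * ‖x‖ ^ 2 + inner ℝ w x) ∂gaussian k z σ2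
      = (1 + 2 * c * σ2) ^ (-(k : ℝ) / 2)
        * Real.exp ((σ2 * ‖w‖ ^ 2 + 2 * inner ℝ z w - 2 * c * ‖z‖ ^ 2)
          / (2 * (1 + 2 * c * σ2))) := by
  have normalization : (2 * Real.pi * σ2) ^ (-(k : ℝ) / 2)
      * (Real.pi / ((1 + 2 * c * σ2) / (2 * σ2))) ^ ((k : ℝ) / 2)
        = (1 + 2 * c * σ2) ^ (-(k : ℝ) / 2) := by
    rw [show Real.pi / ((1 + 2 * c * σ2) / (2 * σ2)) = 2 * Real.pi * σ2 / (1 + 2 * c * σ2) by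
      field_simp, Real.div_rpow (by positivity) hc.le, neg_div,
      Real.rpow_neg (by positivity), Real.rpow_neg hc.le]
    field_simp
  have exponent : -‖z‖ ^ 2 / (2 * σ2)
      + ‖σ2⁻¹ • z + w‖ ^ 2 / (4 * ((1 + 2 * c * σ2) / (2 * σ2)))
        = (σ2 * ‖w‖ ^ 2 + 2 * inner ℝ z w - 2 * c * ‖z‖ ^ 2) / (2 * (1 + 2 * c * σ2)) := by
    rw [norm_add_sq_real, real_inner_smul_left, norm_smul, mul_pow, Real.norm_eq_abs, sq_abs]
    have denom_ne_zero : 1 + 2 * σ2 * c ≠ 0 := mul_right_comm 2 c σ2 ▸ hc.ne'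
    field_simp
    ring
  simp_rw [integral_gaussian_eq hσ.le, exp_neg_sq_norm_sub_mul_exp hσ.ne']
  rw [integral_const_mul, integral_exp_neg_mul_sq_norm_add_inner (by positivity),
    finrank_euclideanSpace_fin, ← exponent, Real.exp_add, ← normalization]
  ring

lemma isProbabilityMeasure_gaussian (hσ : 0 < σ2) (z : EuclideanSpace ℝ (Fin k)) :
    IsProbabilityMeasure (gaussian k z σ2) := by
  have integral_one := integral_exp_gaussian (c := 0) hσ (by simp) z 0
  exact ⟨by simpa [measureReal_def, ENNReal.toReal_eq_one_iff] using integral_one⟩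

lemma integral_exp_gaussian_le (hσ : 0 < σ2) (hc : 0 < c) (z w : EuclideanSpace ℝ (Fin k)) :
    ∫ x, Real.exp (-c * ‖x‖ ^ 2 + inner ℝ w x) ∂gaussian k z σ2
      ≤ (1 + 2 * c * σ2) ^ (-(k : ℝ) / 2) * Real.exp (‖w‖ ^ 2 / (4 * c)) := by
  have complete_square : 0 ≤ ‖w - (2 * c) • z‖ ^ 2 := by positivity
  rw [norm_sub_sq_real, real_inner_smul_right, norm_smul, mul_pow, Real.norm_eq_abs, sq_abs,
    real_inner_comm] at complete_square
  rw [integral_exp_gaussian hσ (by positivity)]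
  refine mul_le_mul_of_nonneg_left (Real.exp_le_exp.2 ?_) (by positivity)
  rw [div_le_div_iff₀ (by positivity) (by positivity)]
  nlinarith

end GaussianMeasure

section DampedMoments

variable {k : ℕ} {σ2 c : ℝ}

lemma pow_le_factorial_mul_cosh (n : ℕ) (y : ℝ) :
    y ^ (2 * n) ≤ (2 * n).factorial * Real.cosh y := by
  rw [← div_le_iff₀' (by positivity)]
  exact le_hasSum (Real.hasSum_cosh y) n fun m _ =>
    div_nonneg ((even_two_mul m).pow_nonneg y) (by positivity)

lemma exp_mul_cosh_eq {V : Type*} [NormedAddCommGroup V] [InnerProductSpace ℝ V]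
    (a : ℝ) (w x : V) :
    Real.exp a * Real.cosh (inner ℝ w x)
      = (Real.exp (a + inner ℝ w x) + Real.exp (a + inner ℝ (-w) x)) / 2 := by
  rw [Real.cosh_eq, inner_neg_left, Real.exp_add, Real.exp_add]
  ring

lemma integrable_exp_mul_cosh_gaussian (hσ : 0 < σ2) (hc : 0 < 1 + 2 * c * σ2)
    (z w : EuclideanSpace ℝ (Fin k)) :
    Integrable (fun x => Real.exp (-c * ‖x‖ ^ 2) * Real.cosh (inner ℝ w x))
      (gaussian k z σ2) := by
  simp_rw [exp_mul_cosh_eq]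
  exact ((integrable_exp_gaussian hσ hc z w).add (integrable_exp_gaussian hσ hc z (-w))).div_const 2

lemma integral_exp_mul_cosh_gaussian_le (hσ : 0 < σ2) (hc : 0 < c)
    (z w : EuclideanSpace ℝ (Fin k)) :
    ∫ x, Real.exp (-c * ‖x‖ ^ 2) * Real.cosh (inner ℝ w x) ∂gaussian k z σ2
      ≤ (1 + 2 * c * σ2) ^ (-(k : ℝ) / 2) * Real.exp (‖w‖ ^ 2 / (4 * c)) := by
  have hc' : 0 < 1 + 2 * c * σ2 := by positivity
  have bound_pos := integral_exp_gaussian_le hσ hc z w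
  have bound_neg := integral_exp_gaussian_le hσ hc z (-w)
  rw [norm_neg] at bound_neg
  simp_rw [exp_mul_cosh_eq]
  rw [integral_div, integral_add (integrable_exp_gaussian hσ hc' z w)
    (integrable_exp_gaussian hσ hc' z (-w))]
  linarith

lemma integrable_exp_mul_inner_pow_gaussian (hσ : 0 < σ2) (hc : 0 < 1 + 2 * c * σ2)
    (z w : EuclideanSpace ℝ (Fin k)) (n : ℕ) :
    Integrable (fun x => Real.exp (-c * ‖x‖ ^ 2) * inner ℝ w x ^ (2 * n)) (gaussian k z σ2) := by
  refine ((integrable_exp_mul_cosh_gaussian hσ hc z w).const_mul (2 * n).factorial).mono'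
    (by fun_prop) (.of_forall fun x => ?_)
  rw [Real.norm_of_nonneg (mul_nonneg (by positivity) ((even_two_mul n).pow_nonneg _)),
    mul_left_comm]
  gcongr
  exact pow_le_factorial_mul_cosh n _

lemma integral_exp_mul_inner_pow_gaussian_le (hσ : 0 < σ2) (hc : 0 < c)
    (z w : EuclideanSpace ℝ (Fin k)) (n : ℕ) :
    ∫ x, Real.exp (-c * ‖x‖ ^ 2) * inner ℝ w x ^ (2 * n) ∂gaussian k z σ2
      ≤ (2 * n).factorial
        * ((1 + 2 * c * σ2) ^ (-(k : ℝ) / 2) * Real.exp (‖w‖ ^ 2 / (4 * c))) := by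
  have hc' : 0 < 1 + 2 * c * σ2 := by positivity
  calc ∫ x, Real.exp (-c * ‖x‖ ^ 2) * inner ℝ w x ^ (2 * n) ∂gaussian k z σ2
      ≤ ∫ x, (2 * n).factorial * (Real.exp (-c * ‖x‖ ^ 2) * Real.cosh (inner ℝ w x))
          ∂gaussian k z σ2 := by
        refine integral_mono (integrable_exp_mul_inner_pow_gaussian hσ hc' z w n)
          ((integrable_exp_mul_cosh_gaussian hσ hc' z w).const_mul _) fun x => ?_
        rw [mul_left_comm]
        dsimp only
        gcongr
        exact pow_le_factorial_mul_cosh n _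
    _ ≤ _ := by
        rw [integral_const_mul]
        gcongr
        exact integral_exp_mul_cosh_gaussian_le hσ hc z w

lemma integral_exp_mul_inner_pow_four_gaussian_le (hσ : 0 < σ2) (hc : 0 < c)
    (z : EuclideanSpace ℝ (Fin k)) {v : EuclideanSpace ℝ (Fin k)} (hv : ‖v‖ ≤ 1) :
    ∫ x, Real.exp (-c * ‖x‖ ^ 2) * inner ℝ v x ^ 4 ∂gaussian k z σ2
      ≤ 36 / c ^ 2 * (1 + 2 * c * σ2) ^ (-(k : ℝ) / 2) := by
  -- The scale `√c` balances the fourth power against the factor `exp (‖w‖ ^ 2 / (4 * c))`.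
  have scaled_moment := integral_exp_mul_inner_pow_gaussian_le hσ hc z (√c • v) 2
  have sqrt_pow_four : √c ^ 4 = c ^ 2 := by
    rw [show 4 = 2 * 2 from rfl, pow_mul, Real.sq_sqrt hc.le]
  have exp_le : Real.exp (‖√c • v‖ ^ 2 / (4 * c)) ≤ 3 / 2 := by
    have norm_le : ‖√c • v‖ ^ 2 ≤ c := by
      rw [norm_smul, mul_pow, Real.norm_eq_abs, sq_abs, Real.sq_sqrt hc.le]
      exact mul_le_of_le_one_right hc.le (pow_le_one₀ (norm_nonneg v) hv)
    calc Real.exp (‖√c • v‖ ^ 2 / (4 * c)) ≤ Real.exp (1 / 4) := by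
          rw [Real.exp_le_exp, div_le_div_iff₀ (by positivity) (by norm_num)]
          linarith
      _ ≤ 1 / (1 - 1 / 4) := Real.exp_bound_div_one_sub_of_interval (by norm_num) (by norm_num)
      _ ≤ 3 / 2 := by norm_num
  simp_rw [real_inner_smul_left, mul_pow, mul_left_comm _ (√c ^ _)] at scaled_moment
  rw [integral_const_mul, sqrt_pow_four, ← le_div_iff₀' (by positivity)] at scaled_moment
  calc _ ≤ _ := scaled_moment
    _ ≤ 24 * ((1 + 2 * c * σ2) ^ (-(k : ℝ) / 2) * (3 / 2)) / c ^ 2 := by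
        norm_num only [Nat.factorial, Nat.cast_ofNat]
        gcongr
    _ = _ := by ring

lemma mul_sub_sq_le (p q t : ℝ) : (p * q - t) ^ 2 ≤ p ^ 4 + q ^ 4 + 2 * t ^ 2 := by
  nlinarith [sq_nonneg (p * q + t), sq_nonneg (p ^ 2 - q ^ 2)]

lemma integral_exp_mul_inner_mul_inner_sub_sq_gaussian_le (hσ : 0 < σ2) (hc : 0 < c)
    (z : EuclideanSpace ℝ (Fin k)) {u v : EuclideanSpace ℝ (Fin k)} (hu : ‖u‖ ≤ 1) (hv : ‖v‖ ≤ 1)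
    (t : ℝ) :
    ∫ x, Real.exp (-c * ‖x‖ ^ 2) * (inner ℝ v x * inner ℝ u x - t) ^ 2 ∂gaussian k z σ2
      ≤ (72 / c ^ 2 + 2 * t ^ 2) * (1 + 2 * c * σ2) ^ (-(k : ℝ) / 2) := by
  have hc' : 0 < 1 + 2 * c * σ2 := by positivity
  have integrable_v := integrable_exp_mul_inner_pow_gaussian hσ hc' z v 2
  have integrable_u := integrable_exp_mul_inner_pow_gaussian hσ hc' z u 2
  have integrable_exp : Integrable (fun x => Real.exp (-c * ‖x‖ ^ 2)) (gaussian k z σ2) := by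
    simpa using integrable_exp_gaussian hσ hc' z 0
  have integral_exp_le :
      ∫ x, Real.exp (-c * ‖x‖ ^ 2) ∂gaussian k z σ2 ≤ (1 + 2 * c * σ2) ^ (-(k : ℝ) / 2) := by
    simpa using integral_exp_gaussian_le hσ hc z 0
  calc ∫ x, Real.exp (-c * ‖x‖ ^ 2) * (inner ℝ v x * inner ℝ u x - t) ^ 2 ∂gaussian k z σ2
      ≤ ∫ x, (Real.exp (-c * ‖x‖ ^ 2) * inner ℝ v x ^ 4 + Real.exp (-c * ‖x‖ ^ 2) * inner ℝ u x ^ 4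
          + 2 * t ^ 2 * Real.exp (-c * ‖x‖ ^ 2)) ∂gaussian k z σ2 := by
        refine integral_mono_of_nonneg (.of_forall fun x => by positivity)
          ((integrable_v.add integrable_u).add (integrable_exp.const_mul _))
          (.of_forall fun x => ?_)
        have pointwise := mul_le_mul_of_nonneg_left
          (mul_sub_sq_le (inner ℝ v x) (inner ℝ u x) t) (Real.exp_pos (-c * ‖x‖ ^ 2)).le
        linarith
    _ = ∫ x, Real.exp (-c * ‖x‖ ^ 2) * inner ℝ v x ^ 4 ∂gaussian k z σ2
          + ∫ x, Real.exp (-c * ‖x‖ ^ 2) * inner ℝ u x ^ 4 ∂gaussian k z σ2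
          + 2 * t ^ 2 * ∫ x, Real.exp (-c * ‖x‖ ^ 2) ∂gaussian k z σ2 := by
        rw [integral_add (integrable_v.fun_add integrable_u) (integrable_exp.const_mul _),
          integral_add integrable_v integrable_u, integral_const_mul]
    _ ≤ 36 / c ^ 2 * (1 + 2 * c * σ2) ^ (-(k : ℝ) / 2)
          + 36 / c ^ 2 * (1 + 2 * c * σ2) ^ (-(k : ℝ) / 2)
          + 2 * t ^ 2 * (1 + 2 * c * σ2) ^ (-(k : ℝ) / 2) := by
        gcongr
        · exact integral_exp_mul_inner_pow_four_gaussian_le hσ hc z hv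
        · exact integral_exp_mul_inner_pow_four_gaussian_le hσ hc z hu
    _ = (72 / c ^ 2 + 2 * t ^ 2) * (1 + 2 * c * σ2) ^ (-(k : ℝ) / 2) := by ring

end DampedMoments

section Normalization

lemma one_add_rpow_sq_mul_rpow_neg_le {t r : ℝ} (ht : 0 ≤ t) (hr : 0 ≤ r) :
    ((1 + t) ^ r) ^ 2 * (1 + 2 * t) ^ (-r) ≤ Real.exp (r * t ^ 2) := by
  have sq_le : (1 + t) ^ 2 ≤ (1 + 2 * t) * Real.exp (t ^ 2) := by
    nlinarith [Real.add_one_le_exp (t ^ 2), sq_nonneg t]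
  calc ((1 + t) ^ r) ^ 2 * (1 + 2 * t) ^ (-r)
      = ((1 + t) ^ 2) ^ r * (1 + 2 * t) ^ (-r) := by
        rw [Real.rpow_pow_comm (by positivity)]
    _ ≤ ((1 + 2 * t) * Real.exp (t ^ 2)) ^ r * (1 + 2 * t) ^ (-r) := by gcongr
    _ = Real.exp (r * t ^ 2) := by
        rw [Real.mul_rpow (by positivity) (by positivity), ← Real.exp_mul,
          Real.rpow_neg (by positivity), mul_comm r]
        field_simp

lemma one_add_pow_four_le (t : ℝ) : (1 + t) ^ 4 ≤ 64 * Real.exp (t ^ 2 / 2) := by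
  have sq_le : (1 + t) ^ 2 ≤ 8 * Real.exp (t ^ 2 / 4) := by
    nlinarith [Real.add_one_le_exp (t ^ 2 / 4), sq_nonneg (t - 1)]
  calc (1 + t) ^ 4 = ((1 + t) ^ 2) ^ 2 := by ring
    _ ≤ (8 * Real.exp (t ^ 2 / 4)) ^ 2 := by gcongr
    _ = 64 * Real.exp (t ^ 2 / 2) := by
        rw [mul_pow, ← Real.exp_nat_mul]
        ring_nf

lemma Zconst_sq_mul_rpow_neg_le {β : ℝ} {k : ℕ} (hβ : 0 < β) (hk : 0 < k) :
    Zconst β k ^ 2 * (1 + 4 / (β * √k)) ^ (-(k : ℝ) / 2) ≤ 64 * Real.exp (4 / β ^ 2) := by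
  have one_le_k : (1 : ℝ) ≤ k := by exact_mod_cast hk
  have main_factor : ((1 + 2 / (β * √k)) ^ ((k : ℝ) / 2)) ^ 2
      * (1 + 4 / (β * √k)) ^ (-(k : ℝ) / 2) ≤ Real.exp (2 / β ^ 2) := by
    convert one_add_rpow_sq_mul_rpow_neg_le (t := 2 / (β * √k)) (r := (k : ℝ) / 2)
      (by positivity) (by positivity) using 2
    · ring_nf
    · rw [div_pow, mul_pow, Real.sq_sqrt (by positivity)]
      field_simp
  have extra_factor : (1 + 2 / (β * √k)) ^ 4 ≤ 64 * Real.exp (2 / β ^ 2) := by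
    refine (one_add_pow_four_le _).trans ?_
    have exponent_le : (2 / (β * √k)) ^ 2 / 2 ≤ 2 / β ^ 2 := by
      rw [div_pow, mul_pow, Real.sq_sqrt (by positivity), div_div,
        div_le_div_iff₀ (by positivity) (by positivity)]
      nlinarith [sq_nonneg β]
    gcongr
  have Zconst_eq : Zconst β k = (1 + 2 / (β * √k)) ^ ((k : ℝ) / 2) * (1 + 2 / (β * √k)) ^ 2 := by
    rw [Zconst, Real.rpow_add (by positivity), Real.rpow_two]
  calc Zconst β k ^ 2 * (1 + 4 / (β * √k)) ^ (-(k : ℝ) / 2)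
      = ((1 + 2 / (β * √k)) ^ ((k : ℝ) / 2)) ^ 2 * (1 + 4 / (β * √k)) ^ (-(k : ℝ) / 2)
        * (1 + 2 / (β * √k)) ^ 4 := by rw [Zconst_eq]; ring
    _ ≤ Real.exp (2 / β ^ 2) * (64 * Real.exp (2 / β ^ 2)) := by gcongr
    _ = 64 * Real.exp (4 / β ^ 2) := by
        rw [mul_left_comm, ← Real.exp_add]
        ring_nf

end Normalization

section Variance

variable {k : ℕ} {β : ℝ}

lemma bilinForm_eq_dotProduct (A : Matrix (Fin k) (Fin k) ℝ) (v u : EuclideanSpace ℝ (Fin k)) :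
    bilinForm A v u = v.ofLp ⬝ᵥ A.mulVec u.ofLp := by
  simp only [bilinForm, dotProduct, Matrix.mulVec, Finset.mul_sum, mul_assoc]

lemma bilinForm_smul_Fmat (a β : ℝ) (x v u : EuclideanSpace ℝ (Fin k)) :
    bilinForm (a • Fmat β k x) v u
      = a * (Real.exp (-‖x‖ ^ 2 / (β * √k))
        * (inner ℝ v x * inner ℝ u x - β * √k / (β * √k + 2) * inner ℝ v u)) := by
  rw [bilinForm_eq_dotProduct, Fmat, ← Matrix.vecMulVec]
  simp [Matrix.smul_mulVec, Matrix.sub_mulVec, Matrix.vecMulVec_mulVec,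
    EuclideanSpace.inner_eq_star_dotProduct, dotProduct_comm, mul_comm]

lemma bilinForm_smul_Fmat_sq (a β : ℝ) (x v u : EuclideanSpace ℝ (Fin k)) :
    bilinForm (a • Fmat β k x) v u ^ 2
      = a ^ 2 * (Real.exp (-(2 / (β * √k)) * ‖x‖ ^ 2)
        * (inner ℝ v x * inner ℝ u x - β * √k / (β * √k + 2) * inner ℝ v u) ^ 2) := by
  have exp_sq : Real.exp (-‖x‖ ^ 2 / (β * √k)) ^ 2 = Real.exp (-(2 / (β * √k)) * ‖x‖ ^ 2) := by
    rw [← Real.exp_nat_mul]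
    ring_nf
  rw [bilinForm_smul_Fmat, mul_pow, mul_pow, exp_sq]

lemma div_add_two_mul_sq_le {s r : ℝ} (hs : 0 < s) (hr : |r| ≤ 1) :
    (s / (s + 2) * r) ^ 2 ≤ s ^ 2 / 4 := by
  have r_sq_le : r ^ 2 ≤ 1 := (sq_le_one_iff_abs_le_one r).2 hr
  calc (s / (s + 2) * r) ^ 2 = (s / (s + 2)) ^ 2 * r ^ 2 := mul_pow _ _ 2
    _ ≤ (s / (s + 2)) ^ 2 := mul_le_of_le_one_right (by positivity) r_sq_le
    _ ≤ (s / 2) ^ 2 := by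
        gcongr
        linarith
    _ = s ^ 2 / 4 := by ring

lemma variance_smul_Fmat_le (hβ : 0 < β) (hk : 0 < k) (a : ℝ) (μ : EuclideanSpace ℝ (Fin k))
    {u v : EuclideanSpace ℝ (Fin k)} (hu : ‖u‖ ≤ 1) (hv : ‖v‖ ≤ 1) :
    ProbabilityTheory.variance (fun x => bilinForm (a • Fmat β k x) v u) (gaussian k μ 1)
      ≤ 19 * a ^ 2 * (β * √k) ^ 2 * (1 + 4 / (β * √k)) ^ (-(k : ℝ) / 2) := by
  have := isProbabilityMeasure_gaussian one_pos μ
  have inner_le : |inner ℝ v u| ≤ 1 :=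
    (abs_real_inner_le_norm v u).trans (mul_le_one₀ hv (norm_nonneg u) hu)
  have measurable_form : Measurable fun x => bilinForm (a • Fmat β k x) v u := by
    simp_rw [bilinForm_smul_Fmat]
    fun_prop
  set s := β * √k
  have hs : 0 < s := by positivity
  set t := s / (s + 2) * inner ℝ v u
  have t_sq_le : t ^ 2 ≤ s ^ 2 / 4 := div_add_two_mul_sq_le hs inner_le
  calc _ ≤ ∫ x, bilinForm (a • Fmat β k x) v u ^ 2 ∂gaussian k μ 1 :=
        ProbabilityTheory.variance_le_expectation_sq measurable_form.aestronglyMeasurable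
    _ ≤ a ^ 2 * ((72 / (2 / s) ^ 2 + 2 * t ^ 2) * (1 + 2 * (2 / s) * 1) ^ (-(k : ℝ) / 2)) := by
        simp_rw [bilinForm_smul_Fmat_sq]
        rw [integral_const_mul]
        exact mul_le_mul_of_nonneg_left (integral_exp_mul_inner_mul_inner_sub_sq_gaussian_le
          one_pos (by positivity) μ hu hv t) (sq_nonneg a)
    _ ≤ a ^ 2 * ((18 * s ^ 2 + s ^ 2) * (1 + 4 / s) ^ (-(k : ℝ) / 2)) := by
        rw [show 72 / (2 / s) ^ 2 = 18 * s ^ 2 by field_simp; norm_num,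
          show 1 + 2 * (2 / s) * 1 = 1 + 4 / s by ring]
        gcongr
        linarith [sq_nonneg s]
    _ = 19 * a ^ 2 * s ^ 2 * (1 + 4 / s) ^ (-(k : ℝ) / 2) := by ring

theorem variance_bound_general (hβ : 0 < β) (μ : EuclideanSpace ℝ (Fin k))
    {u v : EuclideanSpace ℝ (Fin k)} (hu : ‖u‖ ≤ 1) (hv : ‖v‖ ≤ 1) :
    ProbabilityTheory.variance (fun x => bilinForm (Zconst β k • Fmat β k x) v u) (gaussian k μ 1)
      ≤ 1216 * Real.exp (4 / β ^ 2) * β ^ 2 * k := by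
  obtain rfl | hk := Nat.eq_zero_or_pos k
  · simp [bilinForm, ← Pi.zero_def]
  calc _ ≤ 19 * Zconst β k ^ 2 * (β * √k) ^ 2 * (1 + 4 / (β * √k)) ^ (-(k : ℝ) / 2) :=
        variance_smul_Fmat_le hβ hk _ μ hu hv
    _ = 19 * (β ^ 2 * k) * (Zconst β k ^ 2 * (1 + 4 / (β * √k)) ^ (-(k : ℝ) / 2)) := by
        rw [mul_pow, Real.sq_sqrt (by positivity)]
        ring
    _ ≤ 19 * (β ^ 2 * k) * (64 * Real.exp (4 / β ^ 2)) :=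
        mul_le_mul_of_nonneg_left (Zconst_sq_mul_rpow_neg_le hβ hk) (by positivity)
    _ = 1216 * Real.exp (4 / β ^ 2) * β ^ 2 * k := by ring

end Variance

/-- There is an absolute constant `C > 0` such that for `k > 1/β²`,
unit vectors `u, v`, and `x ~ N(μ, I_k)`, the random variable `Y = vᵀ (Z_{β,k} F_{β,k}(x)) u`
satisfies `Var[Y] ≤ C e^{4/β²} β² k`. -/
theorem variance_bound :
    ∃ C : ℝ, 0 < C ∧
      ∀ (k : ℕ) (β : ℝ), 0 < β → 1 / β ^ 2 < (k : ℝ) →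
        ∀ (μ u v : EuclideanSpace ℝ (Fin k)), ‖u‖ = 1 → ‖v‖ = 1 →
          ProbabilityTheory.variance
              (fun x => bilinForm (Zconst β k • Fmat β k x) v u) (gaussian k μ 1)
            ≤ C * Real.exp (4 / β ^ 2) * β ^ 2 * k :=
  ⟨1216, by norm_num, fun _ _ hβ _ μ _ _ hu hv => variance_bound_general hβ μ hu.le hv.le⟩
end

section
/- Let k be an integer with k > 10. Then for every x ∈ ℝ^k: ( ‖x‖² − k·√(k·log k)/(√(k·log k)+2) ) · exp( −(‖x‖² − k)/√(k·log k) ) ≤ 3·√(k·log k). -/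
/-!
For fixed `s > 0`, the function `t ↦ (t - a) exp (-(t - b) / s)` has maximum value
`s exp ((b - a) / s - 1)`, attained at `t = a + s`. Take `b = κ` and `a = κ s / (s + 2)`, so that
`(b - a) / s = 2 κ / (s (s + 2))`, which is at most `2` when `κ ≤ s ^ 2 + 2 s`. For
`s = √(κ log κ)` one has `s ^ 2 ≥ κ - 1`, so it is enough that `2 s ≥ 1`, and this holds as soon
as `κ ≥ 5 / 4`. The supremum is therefore at most `e s`.
-/

open Real

theorem sub_mul_exp_neg_sub_div_le {s : ℝ} (hs : 0 < s) (a b t : ℝ) :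
    (t - a) * exp (-(t - b) / s) ≤ s * exp ((b - a) / s - 1) := by
  have hexp : exp (-(t - b) / s) = exp ((b - a) / s) * exp (-((t - a) / s)) := by
    rw [← exp_add]
    ring_nf
  calc (t - a) * exp (-(t - b) / s)
      = s * exp ((b - a) / s) * ((t - a) / s * exp (-((t - a) / s))) := by
        rw [hexp]
        field_simp
    _ ≤ s * exp ((b - a) / s) * exp (-1) := by
        gcongr
        exact mul_exp_neg_le_exp_neg_one _
    _ = s * exp ((b - a) / s - 1) := by rw [mul_assoc, ← exp_add, ← sub_eq_add_neg]

theorem half_le_sqrt_mul_log {x : ℝ} (hx : 5 / 4 ≤ x) : 1 / 2 ≤ √(x * log x) := by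
  apply le_sqrt_of_sq_le
  linarith [self_sub_one_le_mul_log (x := x) (by linarith)]

theorem le_sqrt_mul_log_mul_add_two {x : ℝ} (hx : 5 / 4 ≤ x) :
    x ≤ √(x * log x) * (√(x * log x) + 2) := by
  have hlog : x - 1 ≤ x * log x := self_sub_one_le_mul_log (by linarith)
  have hsq : √(x * log x) ^ 2 = x * log x := sq_sqrt (by linarith)
  linarith [half_le_sqrt_mul_log hx]

theorem sub_mul_div_add_two_div_le_two {s x : ℝ} (hs : 0 < s) (hx : x ≤ s * (s + 2)) :
    (x - x * s / (s + 2)) / s ≤ 2 :=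
  calc (x - x * s / (s + 2)) / s = 2 * (x / (s * (s + 2))) := by
        field_simp
        ring
    _ ≤ 2 * 1 := by gcongr; exact div_le_one_of_le₀ hx (by positivity)
    _ = 2 := mul_one 2

theorem trace_term_bound_general {κ : ℝ} (hκ : 5 / 4 ≤ κ) (t : ℝ) :
    (t - κ * √(κ * log κ) / (√(κ * log κ) + 2)) * exp (-(t - κ) / √(κ * log κ))
      ≤ exp 1 * √(κ * log κ) := by
  have hle : κ ≤ √(κ * log κ) * (√(κ * log κ) + 2) := le_sqrt_mul_log_mul_add_two hκ
  have hs : 0 < √(κ * log κ) := by linarith [half_le_sqrt_mul_log hκ]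
  set s := √(κ * log κ)
  calc (t - κ * s / (s + 2)) * exp (-(t - κ) / s)
      ≤ s * exp ((κ - κ * s / (s + 2)) / s - 1) := sub_mul_exp_neg_sub_div_le hs _ _ _
    _ ≤ s * exp 1 := by
        gcongr
        linarith [sub_mul_div_add_two_div_le_two hs hle]
    _ = exp 1 * s := mul_comm _ _

/-- For an integer `k > 10` and every `x ∈ ℝ^k`:
`(‖x‖² − k√(k log k)/(√(k log k)+2)) · exp(−(‖x‖² − k)/√(k log k)) ≤ 3√(k log k)`. -/
theorem trace_term_bound (k : ℕ) (hk : 10 < k) :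
    ∀ x : EuclideanSpace ℝ (Fin k),
      (‖x‖ ^ 2 - k * Real.sqrt (k * Real.log k) / (Real.sqrt (k * Real.log k) + 2))
          * Real.exp (-(‖x‖ ^ 2 - k) / Real.sqrt (k * Real.log k))
        ≤ 3 * Real.sqrt (k * Real.log k) := by
  have hk' : (10 : ℝ) < k := mod_cast hk
  exact fun x ↦ (trace_term_bound_general (by linarith) (‖x‖ ^ 2)).trans
    (by gcongr; exact exp_one_lt_three.le)
end

section
/- Let k be an integer with k > 10, let n be a positive integer, and let x_1,…,x_n ∈ ℝ^k be arbitrary points. Set β := √(log k) and Â := (1/n) Σ_{i=1}^n Z_{β,k} F_{β,k}(x_i). Then tr(Â) ≤ 18·√(k·log k). -/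
open MeasureTheory

/-
Write `B = β√k`. As a function of `s = ‖x‖²`, the trace of `F` is `(s - c) e^{-s/B}` with
`c = kB/(B+2)`, whose maximum over `s ∈ ℝ` is `B e^{-c/B - 1}`, because `u e^{-u} ≤ e^{-1}`. Since
`log y ≤ sinh (log y) = (y - y⁻¹)/2` for `y ≥ 1`, the factor `Z` is at most
`e^{(k+4)(B+1)/(B(B+2))}`. Multiplying, `tr (Z F) ≤ B e^E` with `E = (k + 4 + 2B - B²)/(B(B+2))`,
and `E ≤ 2` as soon as `k + 4 ≤ 3B² + 2B`.
-/

lemma log_le_sub_inv_div_two {y : ℝ} (hy : 1 ≤ y) : Real.log y ≤ (y - y⁻¹) / 2 := by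
  rw [← Real.sinh_log (by positivity), Real.self_le_sinh_iff]
  exact Real.log_nonneg hy

lemma sub_mul_exp_neg_div_le {B : ℝ} (hB : 0 < B) (c s : ℝ) :
    (s - c) * Real.exp (-s / B) ≤ B * Real.exp (-c / B - 1) := by
  calc (s - c) * Real.exp (-s / B)
      = B * Real.exp (-c / B) * ((s - c) / B * Real.exp (-((s - c) / B))) := by
        rw [mul_mul_mul_comm, mul_div_cancel₀ _ hB.ne', ← Real.exp_add]
        ring_nf
    _ ≤ B * Real.exp (-c / B) * Real.exp (-1) := by
        gcongr
        exact Real.mul_exp_neg_le_exp_neg_one _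
    _ = B * Real.exp (-c / B - 1) := by rw [mul_assoc, ← Real.exp_add, sub_eq_add_neg]

lemma Zconst_le_exp {β : ℝ} {k : ℕ} (hB : 0 < β * √k) :
    Zconst β k ≤ Real.exp ((k + 4) * (β * √k + 1) / (β * √k * (β * √k + 2))) := by
  unfold Zconst
  set B := β * √k
  have one_le_base : 1 ≤ 1 + 2 / B := le_add_of_nonneg_right (by positivity)
  rw [Real.rpow_def_of_pos (by positivity), Real.exp_le_exp]
  calc Real.log (1 + 2 / B) * ((k : ℝ) / 2 + 2)
      ≤ (1 + 2 / B - (1 + 2 / B)⁻¹) / 2 * ((k : ℝ) / 2 + 2) := by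
        gcongr
        exact log_le_sub_inv_div_two one_le_base
    _ = (k + 4) * (B + 1) / (B * (B + 2)) := by
        field_simp
        ring

lemma trace_Fmat (β : ℝ) (k : ℕ) (x : EuclideanSpace ℝ (Fin k)) :
    (Fmat β k x).trace =
      (‖x‖ ^ 2 - β * √k / (β * √k + 2) * k) * Real.exp (-‖x‖ ^ 2 / (β * √k)) := by
  have trace_outer : (Matrix.of fun i j => x i * x j).trace = ‖x‖ ^ 2 := by
    rw [EuclideanSpace.real_norm_sq_eq]
    simp [Matrix.trace, pow_two]
  rw [Fmat, Matrix.trace_smul, Matrix.trace_sub, Matrix.trace_smul, trace_outer, Matrix.trace_one,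
    Fintype.card_fin, smul_eq_mul, smul_eq_mul, mul_comm]

lemma trace_Fmat_le {β : ℝ} {k : ℕ} (hB : 0 < β * √k) (x : EuclideanSpace ℝ (Fin k)) :
    (Fmat β k x).trace ≤ β * √k * Real.exp (-k / (β * √k + 2) - 1) := by
  rw [trace_Fmat]
  set B := β * √k
  have center_div : -(B / (B + 2) * k) / B = -k / (B + 2) := by field_simp
  rw [← center_div]
  exact sub_mul_exp_neg_div_le hB _ _

lemma trace_Zconst_smul_Fmat_le {β : ℝ} {k : ℕ} (hB : 0 < β * √k)
    (x : EuclideanSpace ℝ (Fin k)) :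
    (Zconst β k • Fmat β k x).trace ≤
      β * √k *
        Real.exp ((k + 4 + 2 * (β * √k) - (β * √k) ^ 2) / (β * √k * (β * √k + 2))) := by
  have trace_le := trace_Fmat_le hB x
  have Z_le := Zconst_le_exp hB
  have Z_nonneg : 0 ≤ Zconst β k := by unfold Zconst; positivity
  rw [Matrix.trace_smul, smul_eq_mul]
  set B := β * √k
  calc Zconst β k * (Fmat β k x).trace
      ≤ Zconst β k * (B * Real.exp (-k / (B + 2) - 1)) := by gcongr
    _ ≤ Real.exp ((k + 4) * (B + 1) / (B * (B + 2))) * (B * Real.exp (-k / (B + 2) - 1)) := by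
        gcongr
    _ = B * Real.exp ((k + 4 + 2 * B - B ^ 2) / (B * (B + 2))) := by
        rw [mul_left_comm, ← Real.exp_add]
        congr 2
        field_simp
        ring

lemma trace_Zconst_smul_Fmat_le_exp_two_mul {β : ℝ} {k : ℕ} (hB : 0 < β * √k)
    (hk : k + 4 ≤ 3 * (β * √k) ^ 2 + 2 * (β * √k)) (x : EuclideanSpace ℝ (Fin k)) :
    (Zconst β k • Fmat β k x).trace ≤ Real.exp 2 * (β * √k) := by
  refine (trace_Zconst_smul_Fmat_le hB x).trans ?_
  rw [mul_comm]
  gcongr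
  rw [div_le_iff₀ (by positivity)]
  linarith

lemma trace_inv_card_smul_sum_le {ι m : Type*} [Fintype m] {s : Finset ι} (hs : s.Nonempty)
    {A : ι → Matrix m m ℝ} {C : ℝ} (hA : ∀ i ∈ s, (A i).trace ≤ C) :
    ((s.card : ℝ)⁻¹ • ∑ i ∈ s, A i).trace ≤ C := by
  rw [Matrix.trace_smul, Matrix.trace_sum, smul_eq_mul,
    inv_mul_le_iff₀ (by exact_mod_cast hs.card_pos), ← nsmul_eq_mul]
  exact s.sum_le_card_nsmul _ C hA

lemma add_four_le_mul_log_add_sqrt_mul_log {k : ℝ} (hk : 2 ≤ k) :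
    k + 4 ≤ 3 * (k * Real.log k) + 2 * √(k * Real.log k) := by
  have log_ge : 2 / 3 ≤ Real.log k := by
    linarith [Real.log_two_gt_d9, Real.log_le_log two_pos hk]
  have mul_log_ge : 2 / 3 * k ≤ k * Real.log k := by
    rw [mul_comm k]
    gcongr
  have one_le_sqrt : 1 ≤ √(k * Real.log k) := Real.one_le_sqrt.mpr (by linarith)
  linarith

lemma exp_two_lt_nine : Real.exp 2 < 9 := by
  calc Real.exp 2 = Real.exp 1 ^ 2 := by rw [← Real.exp_nat_mul]; norm_num
    _ < 3 ^ 2 := by gcongr; exact Real.exp_one_lt_three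
    _ = 9 := by norm_num

theorem trace_bound_general (k n : ℕ) (hk : 2 ≤ k) (hn : 0 < n)
    (x : Fin n → EuclideanSpace ℝ (Fin k)) :
    Matrix.trace ((n : ℝ)⁻¹ •
        ∑ i, Zconst (Real.sqrt (Real.log k)) k • Fmat (Real.sqrt (Real.log k)) k (x i))
      ≤ Real.exp 2 * Real.sqrt (k * Real.log k) := by
  have hk' : (2 : ℝ) ≤ k := by exact_mod_cast hk
  have mul_log_pos : 0 < k * Real.log k := mul_pos (by linarith) (Real.log_pos (by linarith))
  have sqrt_mul_sqrt : √(Real.log k) * √k = √(k * Real.log k) := by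
    rw [mul_comm, Real.sqrt_mul k.cast_nonneg]
  have trace_le (i : Fin n) : (Zconst √(Real.log k) k • Fmat √(Real.log k) k (x i)).trace ≤
      Real.exp 2 * √(k * Real.log k) := by
    rw [← sqrt_mul_sqrt]
    apply trace_Zconst_smul_Fmat_le_exp_two_mul <;> rw [sqrt_mul_sqrt]
    · exact Real.sqrt_pos.mpr mul_log_pos
    · rw [Real.sq_sqrt mul_log_pos.le]
      exact add_four_le_mul_log_add_sqrt_mul_log hk'
  have : Nonempty (Fin n) := Fin.pos_iff_nonempty.mp hn
  simpa using trace_inv_card_smul_sum_le Finset.univ_nonempty fun i _ => trace_le i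

/-- For an integer `k > 10`, a positive integer `n`, arbitrary points
`x_1, …, x_n ∈ ℝ^k`, and `β = √(log k)`, the empirical matrix
`Â = (1/n) Σ_i Z_{β,k} F_{β,k}(x_i)` satisfies `tr(Â) ≤ 18 √(k log k)`. -/
theorem trace_bound (k n : ℕ) (hk : 10 < k) (hn : 0 < n)
    (x : Fin n → EuclideanSpace ℝ (Fin k)) :
    Matrix.trace ((n : ℝ)⁻¹ •
        ∑ i, Zconst (Real.sqrt (Real.log k)) k • Fmat (Real.sqrt (Real.log k)) k (x i))
      ≤ 18 * Real.sqrt (k * Real.log k) :=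
  (trace_bound_general k n (by lia) hn x).trans (by gcongr; linarith [exp_two_lt_nine])
end
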